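/- arXiv:1605.03995 — 2 statements merged into one kernel-verified Lean document; each statement's English description precedes it below -/
import Mathlib

section
/- The 4-dimensional left D-module P is indecomposable; the subspaces P_i = span{p_i, ..., p₄} (i = 1,2,3,4) are D-submodules, and P = P₁ ⊃ P₂ ⊃ P₃ ⊃ P₄ ⊃ 0 is a composition series of P with composition factors P₄ ≅ k_{χ⁰}, P₃/P₄ ≅ k_{χ¹}, P₂/P₃ ≅ k_{χ³}, P₁/P₂ ≅ k_{χ⁰}. -/
open scoped TensorProduct

/-- Generators of the Drinfeld double `D = D(K^cop)`. -/
inductive DGen : Type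
  | a | b | c | d | x | g

open FreeAlgebra in
/-- The defining relations of the algebra `D = D(K^cop)`. -/
inductive DRel (𝕜 : Type) [Field 𝕜] (ξ ν : 𝕜) :
    FreeAlgebra 𝕜 DGen → FreeAlgebra 𝕜 DGen → Prop
  | ab : DRel 𝕜 ξ ν (ι 𝕜 DGen.a * ι 𝕜 DGen.b) (ξ • (ι 𝕜 DGen.b * ι 𝕜 DGen.a))
  | ac : DRel 𝕜 ξ ν (ι 𝕜 DGen.a * ι 𝕜 DGen.c) (ξ • (ι 𝕜 DGen.c * ι 𝕜 DGen.a))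
  | cb : DRel 𝕜 ξ ν (ι 𝕜 DGen.c * ι 𝕜 DGen.b) 0
  | bc : DRel 𝕜 ξ ν (ι 𝕜 DGen.b * ι 𝕜 DGen.c) 0
  | cd : DRel 𝕜 ξ ν (ι 𝕜 DGen.c * ι 𝕜 DGen.d) (ξ • (ι 𝕜 DGen.d * ι 𝕜 DGen.c))
  | bd : DRel 𝕜 ξ ν (ι 𝕜 DGen.b * ι 𝕜 DGen.d) (ξ • (ι 𝕜 DGen.d * ι 𝕜 DGen.b))
  | adcomm : DRel 𝕜 ξ ν (ι 𝕜 DGen.a * ι 𝕜 DGen.d) (ι 𝕜 DGen.d * ι 𝕜 DGen.a)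
  | adone : DRel 𝕜 ξ ν (ι 𝕜 DGen.a * ι 𝕜 DGen.d) 1
  | bsq : DRel 𝕜 ξ ν (ι 𝕜 DGen.b * ι 𝕜 DGen.b) 0
  | csq : DRel 𝕜 ξ ν (ι 𝕜 DGen.c * ι 𝕜 DGen.c) 0
  | aac : DRel 𝕜 ξ ν (ι 𝕜 DGen.a * ι 𝕜 DGen.a * ι 𝕜 DGen.c) (ι 𝕜 DGen.b)
  | afour : DRel 𝕜 ξ ν (ι 𝕜 DGen.a ^ 4) 1
  | gfour : DRel 𝕜 ξ ν (ι 𝕜 DGen.g ^ 4) 1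
  | xsq : DRel 𝕜 ξ ν (ι 𝕜 DGen.x * ι 𝕜 DGen.x) (ι 𝕜 DGen.g * ι 𝕜 DGen.g - 1)
  | gx : DRel 𝕜 ξ ν (ι 𝕜 DGen.g * ι 𝕜 DGen.x) (-(ι 𝕜 DGen.x * ι 𝕜 DGen.g))
  | ag : DRel 𝕜 ξ ν (ι 𝕜 DGen.a * ι 𝕜 DGen.g) (ι 𝕜 DGen.g * ι 𝕜 DGen.a)
  | bg : DRel 𝕜 ξ ν (ι 𝕜 DGen.b * ι 𝕜 DGen.g) (-(ι 𝕜 DGen.g * ι 𝕜 DGen.b))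
  | cg : DRel 𝕜 ξ ν (ι 𝕜 DGen.c * ι 𝕜 DGen.g) (-(ι 𝕜 DGen.g * ι 𝕜 DGen.c))
  | dg : DRel 𝕜 ξ ν (ι 𝕜 DGen.d * ι 𝕜 DGen.g) (ι 𝕜 DGen.g * ι 𝕜 DGen.d)
  | axr : DRel 𝕜 ξ ν (ι 𝕜 DGen.a * ι 𝕜 DGen.x)
      ((ν * ξ) • (ι 𝕜 DGen.b + ι 𝕜 DGen.g * ι 𝕜 DGen.c) - ξ • (ι 𝕜 DGen.x * ι 𝕜 DGen.a))
  | bxr : DRel 𝕜 ξ ν (ι 𝕜 DGen.b * ι 𝕜 DGen.x)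
      ((ν * ξ) • (ι 𝕜 DGen.a - ι 𝕜 DGen.g * ι 𝕜 DGen.d) + ξ • (ι 𝕜 DGen.x * ι 𝕜 DGen.b))
  | cxr : DRel 𝕜 ξ ν (ι 𝕜 DGen.c * ι 𝕜 DGen.x)
      ((ν * ξ) • (ι 𝕜 DGen.d - ι 𝕜 DGen.g * ι 𝕜 DGen.a) - ξ • (ι 𝕜 DGen.x * ι 𝕜 DGen.c))
  | dxr : DRel 𝕜 ξ ν (ι 𝕜 DGen.d * ι 𝕜 DGen.x)
      ((ν * ξ) • (ι 𝕜 DGen.c + ι 𝕜 DGen.g * ι 𝕜 DGen.b) + ξ • (ι 𝕜 DGen.x * ι 𝕜 DGen.d))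

/-- The Drinfeld double `D = D(K^cop)`, presented by generators and relations. -/
abbrev DAlg (𝕜 : Type) [Field 𝕜] (ξ ν : 𝕜) : Type := RingQuot (DRel 𝕜 ξ ν)

variable (𝕜 : Type) [Field 𝕜] (ξ ν : 𝕜)

/-- The generator `a` of `D`. -/
noncomputable def gA : DAlg 𝕜 ξ ν := RingQuot.mkAlgHom 𝕜 (DRel 𝕜 ξ ν) (FreeAlgebra.ι 𝕜 DGen.a)
/-- The generator `b` of `D`. -/
noncomputable def gB : DAlg 𝕜 ξ ν := RingQuot.mkAlgHom 𝕜 (DRel 𝕜 ξ ν) (FreeAlgebra.ι 𝕜 DGen.b)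
/-- The generator `c` of `D`. -/
noncomputable def gC : DAlg 𝕜 ξ ν := RingQuot.mkAlgHom 𝕜 (DRel 𝕜 ξ ν) (FreeAlgebra.ι 𝕜 DGen.c)
/-- The generator `d` of `D`. -/
noncomputable def gD : DAlg 𝕜 ξ ν := RingQuot.mkAlgHom 𝕜 (DRel 𝕜 ξ ν) (FreeAlgebra.ι 𝕜 DGen.d)
/-- The generator `x` of `D`. -/
noncomputable def gX : DAlg 𝕜 ξ ν := RingQuot.mkAlgHom 𝕜 (DRel 𝕜 ξ ν) (FreeAlgebra.ι 𝕜 DGen.x)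
/-- The generator `g` of `D`. -/
noncomputable def gG : DAlg 𝕜 ξ ν := RingQuot.mkAlgHom 𝕜 (DRel 𝕜 ξ ν) (FreeAlgebra.ι 𝕜 DGen.g)

variable {𝕜 ξ ν}
variable {V W : Type} [AddCommGroup V] [Module 𝕜 V] [AddCommGroup W] [Module 𝕜 W]

/-- A `𝕜`-subspace is invariant under a representation of `D`. -/
def DInvariant (ρ : DAlg 𝕜 ξ ν →ₐ[𝕜] Module.End 𝕜 V) (U : Submodule 𝕜 V) : Prop :=
  ∀ z : DAlg 𝕜 ξ ν, ∀ w ∈ U, ρ z w ∈ U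

/-- A representation of `D` is simple (the corresponding `D`-module is simple). -/
def DSimpleRep (ρ : DAlg 𝕜 ξ ν →ₐ[𝕜] Module.End 𝕜 V) : Prop :=
  Nontrivial V ∧ ∀ U : Submodule 𝕜 V, DInvariant ρ U → U = ⊥ ∨ U = ⊤

/-- A representation of `D` is indecomposable. -/
def DIndecRep (ρ : DAlg 𝕜 ξ ν →ₐ[𝕜] Module.End 𝕜 V) : Prop :=
  Nontrivial V ∧ ∀ U₁ U₂ : Submodule 𝕜 V, DInvariant ρ U₁ → DInvariant ρ U₂ →
    IsCompl U₁ U₂ → U₁ = ⊥ ∨ U₂ = ⊥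

/-- The vector `v` spans a copy of the character `χ^j` inside a representation of `D`:
the generators act on `v` by the scalars `χ^j(a) = ξ^j`, `χ^j(b) = χ^j(c) = χ^j(x) = 0`,
`χ^j(d) = ξ^{-j}`, `χ^j(g) = (-1)^j`. -/
def ChiOn (ρ : DAlg 𝕜 ξ ν →ₐ[𝕜] Module.End 𝕜 V) (j : ZMod 4) (v : V) : Prop :=
  ρ (gA 𝕜 ξ ν) v = ξ ^ j.val • v ∧ ρ (gB 𝕜 ξ ν) v = 0 ∧ ρ (gC 𝕜 ξ ν) v = 0 ∧
  ρ (gD 𝕜 ξ ν) v = (ξ ^ j.val)⁻¹ • v ∧ ρ (gX 𝕜 ξ ν) v = 0 ∧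
  ρ (gG 𝕜 ξ ν) v = (-1 : 𝕜) ^ j.val • v

/-- The pair `(e₁, e₂)` realizes the defining action of the module `V_{i,j}`. -/
def VijOn (ρ : DAlg 𝕜 ξ ν →ₐ[𝕜] Module.End 𝕜 V) (i j : ZMod 4) (e₁ e₂ : V) : Prop :=
  ρ (gA 𝕜 ξ ν) e₁ = ξ ^ i.val • e₁ ∧ ρ (gA 𝕜 ξ ν) e₂ = ξ ^ (i.val + 3) • e₂ ∧
  ρ (gB 𝕜 ξ ν) e₁ = 0 ∧ ρ (gB 𝕜 ξ ν) e₂ = (-1 : 𝕜) ^ i.val • e₁ ∧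
  ρ (gC 𝕜 ξ ν) e₁ = 0 ∧ ρ (gC 𝕜 ξ ν) e₂ = e₁ ∧
  ρ (gD 𝕜 ξ ν) e₁ = (ξ ^ i.val)⁻¹ • e₁ ∧ ρ (gD 𝕜 ξ ν) e₂ = (ξ * (ξ ^ i.val)⁻¹) • e₂ ∧
  ρ (gG 𝕜 ξ ν) e₁ = ξ ^ j.val • e₁ ∧ ρ (gG 𝕜 ξ ν) e₂ = ξ ^ (j.val + 2) • e₂ ∧
  ρ (gX 𝕜 ξ ν) e₁ = (ν * ξ * (ξ ^ (3 * i.val) - ξ ^ (i.val + j.val))) • e₂ ∧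
  ρ (gX 𝕜 ξ ν) e₂ = (ν * ξ / 2 * (ξ ^ i.val + ξ ^ (3 * i.val + j.val))) • e₁

/-- The tuple `p` realizes the defining action of the module `P(ℓ) = P ⊗ k_{χ^ℓ}`
(`P = P(0)` being the projective cover of the trivial module). -/
def POn (ρ : DAlg 𝕜 ξ ν →ₐ[𝕜] Module.End 𝕜 V) (ℓ : ZMod 4) (p : Fin 4 → V) : Prop :=
  ρ (gA 𝕜 ξ ν) (p 0) = ξ ^ ℓ.val • p 0 ∧ ρ (gA 𝕜 ξ ν) (p 1) = -(ξ ^ (ℓ.val + 1)) • p 1 ∧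
  ρ (gA 𝕜 ξ ν) (p 2) = ξ ^ (ℓ.val + 1) • p 2 ∧ ρ (gA 𝕜 ξ ν) (p 3) = ξ ^ ℓ.val • p 3 ∧
  ρ (gB 𝕜 ξ ν) (p 0) = ξ ^ ℓ.val • p 2 ∧ ρ (gB 𝕜 ξ ν) (p 1) = ξ ^ (ℓ.val + 1) • p 3 ∧
  ρ (gB 𝕜 ξ ν) (p 2) = 0 ∧ ρ (gB 𝕜 ξ ν) (p 3) = 0 ∧
  ρ (gC 𝕜 ξ ν) (p 0) = -((ξ ^ ℓ.val)⁻¹) • p 2 ∧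
  ρ (gC 𝕜 ξ ν) (p 1) = (ξ * (ξ ^ ℓ.val)⁻¹) • p 3 ∧
  ρ (gC 𝕜 ξ ν) (p 2) = 0 ∧ ρ (gC 𝕜 ξ ν) (p 3) = 0 ∧
  ρ (gD 𝕜 ξ ν) (p 0) = (ξ ^ ℓ.val)⁻¹ • p 0 ∧
  ρ (gD 𝕜 ξ ν) (p 1) = (ξ * (ξ ^ ℓ.val)⁻¹) • p 1 ∧
  ρ (gD 𝕜 ξ ν) (p 2) = -(ξ * (ξ ^ ℓ.val)⁻¹) • p 2 ∧
  ρ (gD 𝕜 ξ ν) (p 3) = (ξ ^ ℓ.val)⁻¹ • p 3 ∧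
  ρ (gX 𝕜 ξ ν) (p 0) = p 1 + ν • p 2 ∧ ρ (gX 𝕜 ξ ν) (p 1) = -(ν • p 3) ∧
  ρ (gX 𝕜 ξ ν) (p 2) = p 3 ∧ ρ (gX 𝕜 ξ ν) (p 3) = 0 ∧
  ρ (gG 𝕜 ξ ν) (p 0) = (-1 : 𝕜) ^ ℓ.val • p 0 ∧
  ρ (gG 𝕜 ξ ν) (p 1) = -((-1 : 𝕜) ^ ℓ.val) • p 1 ∧
  ρ (gG 𝕜 ξ ν) (p 2) = -((-1 : 𝕜) ^ ℓ.val) • p 2 ∧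
  ρ (gG 𝕜 ξ ν) (p 3) = (-1 : 𝕜) ^ ℓ.val • p 3

/-- `ρT` is the tensor product representation of `ρM` and `ρN` on `M ⊗ N`, where the action
of `D` on a tensor product is given through the coproduct of the Drinfeld double:
`a ↦ a⊗a + c⊗b`, `b ↦ b⊗a + d⊗b`, `c ↦ a⊗c + c⊗d`, `d ↦ b⊗c + d⊗d`, `g ↦ g⊗g`,
`x ↦ x⊗1 + g⊗x`. -/
def TensorRepOn (ρM : DAlg 𝕜 ξ ν →ₐ[𝕜] Module.End 𝕜 V) (ρN : DAlg 𝕜 ξ ν →ₐ[𝕜] Module.End 𝕜 W)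
    (ρT : DAlg 𝕜 ξ ν →ₐ[𝕜] Module.End 𝕜 (V ⊗[𝕜] W)) : Prop :=
  ρT (gA 𝕜 ξ ν) = TensorProduct.map (ρM (gA 𝕜 ξ ν)) (ρN (gA 𝕜 ξ ν)) +
      TensorProduct.map (ρM (gC 𝕜 ξ ν)) (ρN (gB 𝕜 ξ ν)) ∧
  ρT (gB 𝕜 ξ ν) = TensorProduct.map (ρM (gB 𝕜 ξ ν)) (ρN (gA 𝕜 ξ ν)) +
      TensorProduct.map (ρM (gD 𝕜 ξ ν)) (ρN (gB 𝕜 ξ ν)) ∧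
  ρT (gC 𝕜 ξ ν) = TensorProduct.map (ρM (gA 𝕜 ξ ν)) (ρN (gC 𝕜 ξ ν)) +
      TensorProduct.map (ρM (gC 𝕜 ξ ν)) (ρN (gD 𝕜 ξ ν)) ∧
  ρT (gD 𝕜 ξ ν) = TensorProduct.map (ρM (gB 𝕜 ξ ν)) (ρN (gC 𝕜 ξ ν)) +
      TensorProduct.map (ρM (gD 𝕜 ξ ν)) (ρN (gD 𝕜 ξ ν)) ∧
  ρT (gG 𝕜 ξ ν) = TensorProduct.map (ρM (gG 𝕜 ξ ν)) (ρN (gG 𝕜 ξ ν)) ∧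
  ρT (gX 𝕜 ξ ν) = TensorProduct.map (ρM (gX 𝕜 ξ ν)) LinearMap.id +
      TensorProduct.map (ρM (gG 𝕜 ξ ν)) (ρN (gX 𝕜 ξ ν))

/-- The class of the vector `v` in the quotient by the invariant subspace `U` is acted on
by `D` through the character `χ^j`. -/
def ChiModOn {𝕜 : Type} [Field 𝕜] {ξ ν : 𝕜} {V : Type} [AddCommGroup V] [Module 𝕜 V]
    (ρ : DAlg 𝕜 ξ ν →ₐ[𝕜] Module.End 𝕜 V) (j : ZMod 4) (v : V) (U : Submodule 𝕜 V) : Prop :=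
  ρ (gA 𝕜 ξ ν) v - ξ ^ j.val • v ∈ U ∧ ρ (gB 𝕜 ξ ν) v ∈ U ∧ ρ (gC 𝕜 ξ ν) v ∈ U ∧
  ρ (gD 𝕜 ξ ν) v - (ξ ^ j.val)⁻¹ • v ∈ U ∧ ρ (gX 𝕜 ξ ν) v ∈ U ∧
  ρ (gG 𝕜 ξ ν) v - (-1 : 𝕜) ^ j.val • v ∈ U

/-! Every nonzero invariant subspace of `P(ℓ)` contains `p₄`: according to whether the first
nonzero coordinate of a vector is the one at `p₁`, `p₂`, `p₃` or `p₄`, the element `xb`, `b`, `x`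
or `1` of `D` sends it to a nonzero multiple of `p₄`. Two nonzero invariant subspaces therefore
always intersect, so `P(ℓ)` is indecomposable. The filtration is built from the bottom: if `D`
acts on the class of `v` modulo an invariant subspace `U` through a character, then `𝕜 v + U` is
invariant. -/

/-- The generator of `D` with a given label, which lets statements quantify over the generators;
it is definitionally `gA`, `gB`, `gC`, `gD`, `gX` or `gG` on the respective constructor. -/
noncomputable def DAlg.generator (𝕜 : Type) [Field 𝕜] (ξ ν : 𝕜) (s : DGen) : DAlg 𝕜 ξ ν :=
  RingQuot.mkAlgHom 𝕜 (DRel 𝕜 ξ ν) (FreeAlgebra.ι 𝕜 s)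

open Submodule in
lemma span_image_lt_span_image_insert {ι R M : Type*} [Ring R] [Nontrivial R] [AddCommGroup M]
    [Module R M] {p : ι → M} (hp : LinearIndependent R p) {i : ι} {s : Set ι} (hi : i ∉ s) :
    span R (p '' s) < span R (p '' insert i s) := by
  refine SetLike.lt_iff_le_and_exists.mpr
    ⟨span_mono (Set.image_mono (Set.subset_insert i s)), p i, ?_, hp.notMem_span_image hi⟩
  exact subset_span (Set.mem_image_of_mem p (Set.mem_insert i s))

lemma pow_val_add_of_pow_eq_one {M : Type*} [Monoid M] {n : ℕ} [NeZero n] {x : M}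
    (hx : x ^ n = 1) (i j : ZMod n) : x ^ (i + j).val = x ^ i.val * x ^ j.val := by
  rw [ZMod.val_add, ← pow_eq_pow_mod _ hx, pow_add]

lemma neg_one_pow_val_add_of_odd {R : Type*} [Monoid R] [HasDistribNeg R] {n : ℕ} [NeZero n]
    (hn : Even n) (i : ZMod n) {j : ZMod n} (hj : Odd j.val) :
    (-1 : R) ^ (i + j).val = -(-1) ^ i.val := by
  rw [pow_val_add_of_pow_eq_one hn.neg_one_pow, hj.neg_one_pow, mul_neg_one]

lemma inv_eq_neg_of_sq_eq_neg_one {K : Type*} [DivisionRing K] {x : K} (hx : x ^ 2 = -1) :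
    x⁻¹ = -x :=
  inv_eq_of_mul_eq_one_right (by rw [mul_neg, ← sq, hx, neg_neg])

section Representation

open Submodule

variable {ρ : DAlg 𝕜 ξ ν →ₐ[𝕜] Module.End 𝕜 V} {U : Submodule 𝕜 V} {j : ZMod 4} {v : V}

lemma dInvariant_of_forall_generator (h : ∀ s, ∀ w ∈ U, ρ (DAlg.generator 𝕜 ξ ν s) w ∈ U) :
    DInvariant ρ U := by
  intro z
  obtain ⟨y, rfl⟩ := RingQuot.mkAlgHom_surjective 𝕜 (DRel 𝕜 ξ ν) z
  induction y using FreeAlgebra.induction with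
  | grade0 r =>
    intro w hw
    rw [AlgHom.commutes, AlgHom.commutes, Module.algebraMap_end_apply]
    exact U.smul_mem r hw
  | grade1 s => exact h s
  | mul y z hy hz =>
    intro w hw
    rw [map_mul, map_mul, Module.End.mul_apply]
    exact hy _ (hz w hw)
  | add y z hy hz =>
    intro w hw
    rw [map_add, map_add, LinearMap.add_apply]
    exact U.add_mem (hy w hw) (hz w hw)

lemma dIndecRep_of_forall_mem (hv : v ≠ 0) (h : ∀ U, DInvariant ρ U → U ≠ ⊥ → v ∈ U) :
    DIndecRep ρ := by
  refine ⟨nontrivial_of_ne v 0 hv, fun U₁ U₂ h₁ h₂ hcompl => ?_⟩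
  by_contra! hne
  exact hv (disjoint_def.mp hcompl.disjoint v (h U₁ h₁ hne.1) (h U₂ h₂ hne.2))

lemma chiModOn_bot_iff : ChiModOn ρ j v ⊥ ↔ ChiOn ρ j v := by
  simp only [ChiModOn, ChiOn, mem_bot, sub_eq_zero]

lemma ChiModOn.exists_generator_sub_smul_mem (h : ChiModOn ρ j v U) (s : DGen) :
    ∃ r : 𝕜, ρ (DAlg.generator 𝕜 ξ ν s) v - r • v ∈ U := by
  obtain ⟨ha, hb, hc, hd, hx, hg⟩ := h
  cases s with
  | a => exact ⟨_, ha⟩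
  | b => exact ⟨0, by rwa [zero_smul, sub_zero]⟩
  | c => exact ⟨0, by rwa [zero_smul, sub_zero]⟩
  | d => exact ⟨_, hd⟩
  | x => exact ⟨0, by rwa [zero_smul, sub_zero]⟩
  | g => exact ⟨_, hg⟩

lemma ChiModOn.dInvariant_span_singleton_sup (h : ChiModOn ρ j v U) (hU : DInvariant ρ U) :
    DInvariant ρ (span 𝕜 {v} ⊔ U) := by
  refine dInvariant_of_forall_generator fun s w hw => ?_
  obtain ⟨r, hr⟩ := h.exists_generator_sub_smul_mem s
  obtain ⟨_, hy, u, hu, rfl⟩ := mem_sup.mp hw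
  obtain ⟨t, rfl⟩ := mem_span_singleton.mp hy
  refine mem_sup.mpr ⟨(t * r) • v, smul_mem _ _ (mem_span_singleton_self v), _,
    U.add_mem (U.smul_mem t hr) (hU (DAlg.generator 𝕜 ξ ν s) u hu), ?_⟩
  rw [map_add, map_smul]
  module

lemma ChiModOn.dInvariant_span_insert {s : Set V} (h : ChiModOn ρ j v (span 𝕜 s))
    (hs : DInvariant ρ (span 𝕜 s)) : DInvariant ρ (span 𝕜 (insert v s)) := by
  rw [span_insert]
  exact h.dInvariant_span_singleton_sup hs

lemma ChiOn.dInvariant_span_singleton (h : ChiOn ρ j v) : DInvariant ρ (span 𝕜 {v}) := by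
  have hbot : DInvariant ρ (⊥ : Submodule 𝕜 V) := by simp [DInvariant]
  simpa using (chiModOn_bot_iff.mpr h).dInvariant_span_singleton_sup hbot

end Representation

namespace POn

open Submodule

variable {ρ : DAlg 𝕜 ξ ν →ₐ[𝕜] Module.End 𝕜 V} {ℓ : ZMod 4} {p : Fin 4 → V}

lemma chiOn_three (h : POn ρ ℓ p) : ChiOn ρ ℓ (p 3) := by
  obtain ⟨-, -, -, ha, -, -, -, hb, -, -, -, hc, -, -, -, hd, -, -, -, hx, -, -, -, hg⟩ := h
  exact ⟨ha, hb, hc, hd, hx, hg⟩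

lemma chiModOn_two (hξ : ξ ^ 2 = -1) (h : POn ρ ℓ p) :
    ChiModOn ρ (ℓ + 1) (p 2) (span 𝕜 {p 3}) := by
  obtain ⟨-, -, ha, -, -, -, hb, -, -, -, hc, -, -, -, hd, -, -, -, hx, -, -, -, hg, -⟩ := h
  have h3 : p 3 ∈ span 𝕜 {p 3} := mem_span_singleton_self _
  have hξ4 : ξ ^ 4 = 1 := by linear_combination (ξ ^ 2 - 1) * hξ
  have hpow : ξ ^ (ℓ + 1).val = ξ ^ (ℓ.val + 1) := by
    rw [pow_val_add_of_pow_eq_one hξ4, show (1 : ZMod 4).val = 1 from rfl, pow_add]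
  have hneg : (-1 : 𝕜) ^ (ℓ + 1).val = -(-1) ^ ℓ.val :=
    neg_one_pow_val_add_of_odd (by decide) ℓ odd_one
  have hinv : (ξ ^ (ℓ + 1).val)⁻¹ = -(ξ * (ξ ^ ℓ.val)⁻¹) := by
    rw [hpow, pow_succ', mul_inv, inv_eq_neg_of_sq_eq_neg_one hξ, neg_mul]
  refine ⟨?_, ?_, ?_, ?_, ?_, ?_⟩
  · simp [ha, hpow]
  · simp [hb]
  · simp [hc]
  · simp [hd, hinv]
  · rwa [hx]
  · simp [hg, hneg]

lemma chiModOn_one (hξ : ξ ^ 2 = -1) (h : POn ρ ℓ p) :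
    ChiModOn ρ (ℓ + 3) (p 1) (span 𝕜 {p 2, p 3}) := by
  obtain ⟨-, ha, -, -, -, hb, -, -, -, hc, -, -, -, hd, -, -, -, hx, -, -, -, hg, -, -⟩ := h
  have h3 : p 3 ∈ span 𝕜 {p 2, p 3} := subset_span (by simp)
  have hξ4 : ξ ^ 4 = 1 := by linear_combination (ξ ^ 2 - 1) * hξ
  have hpow : ξ ^ (ℓ + 3).val = -ξ ^ (ℓ.val + 1) := by
    rw [pow_val_add_of_pow_eq_one hξ4, show (3 : ZMod 4).val = 3 from rfl]
    linear_combination ξ ^ (ℓ.val + 1) * hξ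
  have hneg : (-1 : 𝕜) ^ (ℓ + 3).val = -(-1) ^ ℓ.val :=
    neg_one_pow_val_add_of_odd (by decide) ℓ (Nat.odd_iff.mpr rfl)
  have hinv : (ξ ^ (ℓ + 3).val)⁻¹ = ξ * (ξ ^ ℓ.val)⁻¹ := by
    rw [hpow, inv_neg, pow_succ', mul_inv, inv_eq_neg_of_sq_eq_neg_one hξ, neg_mul, neg_neg]
  refine ⟨?_, ?_, ?_, ?_, ?_, ?_⟩
  · simp [ha, hpow]
  · simpa only [hb] using smul_mem _ _ h3
  · simpa only [hc] using smul_mem _ _ h3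
  · simp [hd, hinv]
  · simpa only [hx] using neg_mem (smul_mem _ ν h3)
  · simp [hg, hneg]

lemma chiModOn_zero (h : POn ρ ℓ p) : ChiModOn ρ ℓ (p 0) (span 𝕜 {p 1, p 2, p 3}) := by
  obtain ⟨ha, -, -, -, hb, -, -, -, hc, -, -, -, hd, -, -, -, hx, -, -, -, hg, -, -, -⟩ := h
  have h1 : p 1 ∈ span 𝕜 {p 1, p 2, p 3} := subset_span (by simp)
  have h2 : p 2 ∈ span 𝕜 {p 1, p 2, p 3} := subset_span (by simp)
  refine ⟨?_, ?_, ?_, ?_, ?_, ?_⟩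
  · simp [ha]
  · simpa only [hb] using smul_mem _ _ h2
  · simpa only [hc] using smul_mem _ _ h2
  · simp [hd]
  · simpa only [hx] using add_mem h1 (smul_mem _ ν h2)
  · simp [hg]

lemma gB_apply_sum (h : POn ρ ℓ p) (w : Fin 4 → 𝕜) :
    ρ (gB 𝕜 ξ ν) (∑ i, w i • p i) =
      (w 0 * ξ ^ ℓ.val) • p 2 + (w 1 * ξ ^ (ℓ.val + 1)) • p 3 := by
  obtain ⟨-, -, -, -, hb₀, hb₁, hb₂, hb₃, -⟩ := h
  simp only [Fin.sum_univ_four, map_add, map_smul, hb₀, hb₁, hb₂, hb₃]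
  module

lemma gX_apply_sum (h : POn ρ ℓ p) (w : Fin 4 → 𝕜) :
    ρ (gX 𝕜 ξ ν) (∑ i, w i • p i) =
      w 0 • (p 1 + ν • p 2) + (w 2 - w 1 * ν) • p 3 := by
  obtain ⟨-, -, -, -, -, -, -, -, -, -, -, -, -, -, -, -, hx₀, hx₁, hx₂, hx₃, -⟩ := h
  simp only [Fin.sum_univ_four, map_add, map_smul, hx₀, hx₁, hx₂, hx₃]
  module

lemma gX_gB_apply_sum (h : POn ρ ℓ p) (w : Fin 4 → 𝕜) :
    ρ (gX 𝕜 ξ ν * gB 𝕜 ξ ν) (∑ i, w i • p i) = (w 0 * ξ ^ ℓ.val) • p 3 := by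
  obtain ⟨-, -, -, -, -, -, -, -, -, -, -, -, -, -, -, -, -, -, hx₂, hx₃, -⟩ := id h
  rw [map_mul, Module.End.mul_apply, h.gB_apply_sum]
  simp only [map_add, map_smul, hx₂, hx₃, smul_zero, add_zero]

lemma exists_apply_sum_eq_smul (hξ : ξ ≠ 0) (h : POn ρ ℓ p) {w : Fin 4 → 𝕜} (hw : w ≠ 0) :
    ∃ z : DAlg 𝕜 ξ ν, ∃ r : 𝕜, r ≠ 0 ∧ ρ z (∑ i, w i • p i) = r • p 3 := by
  obtain h₀ | h₀ := ne_or_eq (w 0) 0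
  · exact ⟨gX 𝕜 ξ ν * gB 𝕜 ξ ν, _, mul_ne_zero h₀ (pow_ne_zero _ hξ), h.gX_gB_apply_sum w⟩
  obtain h₁ | h₁ := ne_or_eq (w 1) 0
  · exact ⟨gB 𝕜 ξ ν, w 1 * ξ ^ (ℓ.val + 1), mul_ne_zero h₁ (pow_ne_zero _ hξ),
      by simp [h.gB_apply_sum, h₀]⟩
  obtain h₂ | h₂ := ne_or_eq (w 2) 0
  · exact ⟨gX 𝕜 ξ ν, w 2, h₂, by simp [h.gX_apply_sum, h₀, h₁]⟩
  have h₃ : w 3 ≠ 0 := fun h₃ => hw (by ext i; fin_cases i <;> assumption)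
  exact ⟨1, w 3, h₃, by simp [Fin.sum_univ_four, h₀, h₁, h₂]⟩

lemma three_mem_of_dInvariant (hξ : ξ ≠ 0) (hspan : span 𝕜 (Set.range p) = ⊤) (h : POn ρ ℓ p)
    {U : Submodule 𝕜 V} (hU : DInvariant ρ U) (hne : U ≠ ⊥) : p 3 ∈ U := by
  obtain ⟨u, hu, hu₀⟩ := U.ne_bot_iff.mp hne
  obtain ⟨w, rfl⟩ := (mem_span_range_iff_exists_fun 𝕜).mp (hspan ▸ mem_top : u ∈ span 𝕜 _)
  have hw : w ≠ 0 := by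
    rintro rfl
    simp at hu₀
  obtain ⟨z, r, hr, hz⟩ := h.exists_apply_sum_eq_smul hξ hw
  exact (U.smul_mem_iff hr).mp (hz ▸ hU z _ hu)

lemma dIndecRep (hξ : ξ ≠ 0) (hp₃ : p 3 ≠ 0) (hspan : span 𝕜 (Set.range p) = ⊤)
    (h : POn ρ ℓ p) : DIndecRep ρ :=
  dIndecRep_of_forall_mem hp₃ fun _ => h.three_mem_of_dInvariant hξ hspan

end POn

theorem stmt_11_general {ρ : DAlg 𝕜 ξ ν →ₐ[𝕜] Module.End 𝕜 V} {ℓ : ZMod 4} {p : Fin 4 → V}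
    (hξ : IsPrimitiveRoot ξ 4) (hli : LinearIndependent 𝕜 p)
    (hspan : Submodule.span 𝕜 (Set.range p) = ⊤) (hρ : POn ρ ℓ p) :
    DIndecRep ρ ∧
    (letI P₁ : Submodule 𝕜 V := Submodule.span 𝕜 {p 0, p 1, p 2, p 3}
     letI P₂ : Submodule 𝕜 V := Submodule.span 𝕜 {p 1, p 2, p 3}
     letI P₃ : Submodule 𝕜 V := Submodule.span 𝕜 {p 2, p 3}
     letI P₄ : Submodule 𝕜 V := Submodule.span 𝕜 {p 3}
     DInvariant ρ P₁ ∧ DInvariant ρ P₂ ∧ DInvariant ρ P₃ ∧ DInvariant ρ P₄ ∧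
     P₁ = ⊤ ∧ P₂ < P₁ ∧ P₃ < P₂ ∧ P₄ < P₃ ∧ ⊥ < P₄ ∧
     ChiOn ρ ℓ (p 3) ∧ ChiModOn ρ (ℓ + 1) (p 2) P₄ ∧ ChiModOn ρ (ℓ + 3) (p 1) P₃ ∧
     ChiModOn ρ ℓ (p 0) P₂) := by
  have hξ2 : ξ ^ 2 = -1 := (hξ.pow four_pos (b := 2) rfl).eq_neg_one_of_two_right
  have h₂ := hρ.chiModOn_two hξ2
  have h₁ := hρ.chiModOn_one hξ2
  have inv₄ := hρ.chiOn_three.dInvariant_span_singleton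
  have inv₃ := h₂.dInvariant_span_insert inv₄
  have inv₂ := h₁.dInvariant_span_insert inv₃
  have inv₁ := hρ.chiModOn_zero.dInvariant_span_insert inv₂
  refine ⟨hρ.dIndecRep (hξ.ne_zero four_ne_zero) (hli.ne_zero 3) hspan, inv₁, inv₂, inv₃, inv₄,
    ?_, ?_, ?_, ?_, ?_, hρ.chiOn_three, h₂, h₁, hρ.chiModOn_zero⟩
  · have huniv : (Set.univ : Set (Fin 4)) = {0, 1, 2, 3} := by ext i; fin_cases i <;> simp
    rw [← hspan, ← Set.image_univ, huniv]
    simp only [Set.image_insert_eq, Set.image_singleton]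
  · simpa [Set.image_insert_eq] using
      span_image_lt_span_image_insert hli (i := 0) (s := {1, 2, 3}) (by simp)
  · simpa [Set.image_insert_eq] using
      span_image_lt_span_image_insert hli (i := 1) (s := {2, 3}) (by simp)
  · simpa [Set.image_insert_eq] using
      span_image_lt_span_image_insert hli (i := 2) (s := {3}) (by simp)
  · simpa [Set.image_insert_eq] using
      span_image_lt_span_image_insert hli (i := 3) (s := ∅) (by simp)

/-- The 4-dimensional left `D`-module `P` is indecomposable; the
subspaces `Pᵢ = span{pᵢ, …, p₄}` are `D`-submodules and
`P = P₁ ⊃ P₂ ⊃ P₃ ⊃ P₄ ⊃ 0` is a composition series of `P`, with composition factors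
`P₄ ≅ 𝕜_{χ⁰}`, `P₃/P₄ ≅ 𝕜_{χ¹}`, `P₂/P₃ ≅ 𝕜_{χ³}` and `P₁/P₂ ≅ 𝕜_{χ⁰}`. -/
theorem stmt_11 (𝕜 : Type) [Field 𝕜] [IsAlgClosed 𝕜] [CharZero 𝕜]
    (ξ ν : 𝕜) (hξ : IsPrimitiveRoot ξ 4) (hν : ν ^ 2 = 2)
    (ρ : DAlg 𝕜 ξ ν →ₐ[𝕜] Module.End 𝕜 (Fin 4 → 𝕜))
    (hρ : POn ρ 0 (fun m => Pi.single m (1 : 𝕜))) :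
    -- `P` is indecomposable
    DIndecRep ρ ∧
    -- the subspaces `Pᵢ` are `D`-submodules forming a strictly decreasing chain
    (letI p : Fin 4 → (Fin 4 → 𝕜) := fun m => Pi.single m (1 : 𝕜)
     letI P₁ : Submodule 𝕜 (Fin 4 → 𝕜) := Submodule.span 𝕜 {p 0, p 1, p 2, p 3}
     letI P₂ : Submodule 𝕜 (Fin 4 → 𝕜) := Submodule.span 𝕜 {p 1, p 2, p 3}
     letI P₃ : Submodule 𝕜 (Fin 4 → 𝕜) := Submodule.span 𝕜 {p 2, p 3}
     letI P₄ : Submodule 𝕜 (Fin 4 → 𝕜) := Submodule.span 𝕜 {p 3}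
     DInvariant ρ P₁ ∧ DInvariant ρ P₂ ∧ DInvariant ρ P₃ ∧ DInvariant ρ P₄ ∧
     P₁ = ⊤ ∧ P₂ < P₁ ∧ P₃ < P₂ ∧ P₄ < P₃ ∧ ⊥ < P₄ ∧
     -- the composition factors: `P₄ ≅ 𝕜_{χ⁰}`, `P₃/P₄ ≅ 𝕜_{χ¹}`, `P₂/P₃ ≅ 𝕜_{χ³}`,
     -- `P₁/P₂ ≅ 𝕜_{χ⁰}` (each factor is 1-dimensional, hence simple, so the chain is a
     -- composition series)
     ChiOn ρ 0 (p 3) ∧ ChiModOn ρ 1 (p 2) P₄ ∧ ChiModOn ρ 3 (p 1) P₃ ∧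
     ChiModOn ρ 0 (p 0) P₂) := by
  have hspan : Submodule.span 𝕜 (Set.range fun m : Fin 4 => Pi.single m (1 : 𝕜)) = ⊤ :=
    funext (Pi.basisFun_apply 𝕜 (Fin 4)) ▸ (Pi.basisFun 𝕜 (Fin 4)).span_eq
  simpa only [zero_add] using
    stmt_11_general hξ (Pi.linearIndependent_single_one (Fin 4) 𝕜) hspan hρ
end

section
/- P is a projective left D-module, and P₂ = span{p₂, p₃, p₄} is the unique maximal proper D-submodule of P, with P/P₂ ≅ k_{χ⁰}; hence P is a projective cover of the trivial module k_{χ⁰} = k_ε. -/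
open scoped TensorProduct

variable (𝕜 : Type) [Field 𝕜] (ξ ν : 𝕜)

variable {𝕜 ξ ν}
variable {V W : Type} [AddCommGroup V] [Module 𝕜 V] [AddCommGroup W] [Module 𝕜 W]

/-!
Call `w` a weight vector of weight `s` if `a w = s w` and `g w = s² w`. When `s⁴ = 1`, the
relations of `D` express the action of all six generators on `w`, on `u = s⁻¹ b w`, which has
weight `ξ s`, and on `x w`, `x u`: the tuple `(w, x w - ν u, u, x u)` transforms exactly like the
basis of `P(ℓ)`, where `s = ξ ^ ℓ`. Hence `D`-linear maps `P(ℓ) → W` correspond to weight vectors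
of `W`. Since `a` and `g` commute and have order dividing `4`, averaging lifts weight vectors along
surjections, so `P(ℓ)` is projective. Finally, applying `b` and `x` to a vector with nonzero
`p₁`-coordinate yields first `p₄`, then `p₃`, then `p₂`, so such a vector generates `P(ℓ)`.
-/

section EigenAverage

variable {K E F : Type*} [Field K] [AddCommGroup E] [Module K E] [AddCommGroup F] [Module K F]

/-- The average of `(μ⁻¹ T) ^ i` over `i < n`. If `T ^ n = 1`, `μ ^ n = 1` and `n` is invertible,
it is the projection onto the `μ`-eigenspace of `T`; only the facts needed to lift eigenvectors
are recorded here. -/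
noncomputable def eigenAverage (n : ℕ) (μ : K) (T : Module.End K E) : Module.End K E :=
  (n : K)⁻¹ • ∑ i ∈ Finset.range n, (μ⁻¹ • T) ^ i

theorem apply_eigenAverage {n : ℕ} {μ : K} {T : Module.End K E} (hT : T ^ n = 1)
    (hμ : μ ^ n = 1) (hμ₀ : μ ≠ 0) (v : E) :
    T (eigenAverage n μ T v) = μ • eigenAverage n μ T v := by
  have hpow : (μ⁻¹ • T) ^ n = 1 := by rw [smul_pow, hT, inv_pow, hμ, inv_one, one_smul]
  have hgeom : (μ⁻¹ • T) * ∑ i ∈ Finset.range n, (μ⁻¹ • T) ^ i =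
      ∑ i ∈ Finset.range n, (μ⁻¹ • T) ^ i := by
    rw [← sub_eq_zero, ← sub_one_mul, mul_geom_sum, hpow, sub_self]
  have hfix : (μ⁻¹ • T) * eigenAverage n μ T = eigenAverage n μ T := by
    rw [eigenAverage, mul_smul_comm, hgeom]
  rw [← inv_smul_eq_iff₀ hμ₀]
  exact LinearMap.congr_fun hfix v

theorem eigenAverage_apply_of_eigenvector {n : ℕ} (hn : (n : K) ≠ 0) {μ : K} (hμ₀ : μ ≠ 0)
    {T : Module.End K E} {v : E} (hv : T v = μ • v) : eigenAverage n μ T v = v := by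
  have hfix : (μ⁻¹ • T) v = v := by rw [LinearMap.smul_apply, hv, inv_smul_smul₀ hμ₀]
  have hpow (i : ℕ) : ((μ⁻¹ • T) ^ i) v = v := by
    rw [Module.End.pow_apply, Function.iterate_fixed hfix]
  simp [eigenAverage, hpow, ← Nat.cast_smul_eq_nsmul K, hn]

theorem map_eigenAverage {S : Module.End K E} {T : Module.End K F} {f : E →ₗ[K] F}
    (hf : ∀ v, f (S v) = T (f v)) (n : ℕ) (μ : K) (v : E) :
    f (eigenAverage n μ S v) = eigenAverage n μ T (f v) := by
  have hpow (i : ℕ) : f (((μ⁻¹ • S) ^ i) v) = ((μ⁻¹ • T) ^ i) (f v) := by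
    simp only [Module.End.pow_apply]
    exact Function.Semiconj.iterate_right (fun u => by simp [hf]) i v
  simp [eigenAverage, hpow]

end EigenAverage

theorem span_image_compl_singleton_eq_ker_coord {ι R M : Type*} [Semiring R] [AddCommMonoid M]
    [Module R M] (b : Module.Basis ι R M) (i : ι) :
    Submodule.span R (b '' {i}ᶜ) = LinearMap.ker (b.coord i) := by
  ext v
  simp [Module.Basis.mem_span_image, Set.subset_compl_singleton_iff]

@[elab_as_elim]
theorem DAlg.induction {motive : DAlg 𝕜 ξ ν → Prop}
    (algebraMap : ∀ r : 𝕜, motive (algebraMap 𝕜 _ r))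
    (add : ∀ y z, motive y → motive z → motive (y + z))
    (mul : ∀ y z, motive y → motive z → motive (y * z))
    (a : motive (gA 𝕜 ξ ν)) (b : motive (gB 𝕜 ξ ν)) (c : motive (gC 𝕜 ξ ν))
    (d : motive (gD 𝕜 ξ ν)) (x : motive (gX 𝕜 ξ ν)) (g : motive (gG 𝕜 ξ ν))
    (z : DAlg 𝕜 ξ ν) : motive z := by
  obtain ⟨y, rfl⟩ := RingQuot.mkAlgHom_surjective 𝕜 (DRel 𝕜 ξ ν) z
  induction y using FreeAlgebra.induction with
  | grade0 r => simpa using algebraMap r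
  | grade1 t => cases t <;> assumption
  | mul y z hy hz => rw [map_mul]; exact mul _ _ hy hz
  | add y z hy hz => rw [map_add]; exact add _ _ hy hz

namespace DAlg

variable {E : Type*} [AddCommGroup E] [Module 𝕜 E] (ρ : DAlg 𝕜 ξ ν →ₐ[𝕜] Module.End 𝕜 E)

theorem map_mkAlgHom_eq_of_rel {y z : FreeAlgebra 𝕜 DGen} (h : DRel 𝕜 ξ ν y z) :
    ρ (RingQuot.mkAlgHom 𝕜 (DRel 𝕜 ξ ν) y) = ρ (RingQuot.mkAlgHom 𝕜 (DRel 𝕜 ξ ν) z) := by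
  rw [RingQuot.mkAlgHom_rel 𝕜 h]

theorem map_gA_pow_four : ρ (gA 𝕜 ξ ν) ^ 4 = 1 := by
  simpa [gA] using map_mkAlgHom_eq_of_rel ρ DRel.afour

theorem map_gG_pow_four : ρ (gG 𝕜 ξ ν) ^ 4 = 1 := by
  simpa [gG] using map_mkAlgHom_eq_of_rel ρ DRel.gfour

variable (v : E)

theorem gA_gB_apply : ρ (gA 𝕜 ξ ν) (ρ (gB 𝕜 ξ ν) v) = ξ • ρ (gB 𝕜 ξ ν) (ρ (gA 𝕜 ξ ν) v) := by
  simpa [gA, gB] using LinearMap.congr_fun (map_mkAlgHom_eq_of_rel ρ DRel.ab) v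

theorem gA_gC_apply : ρ (gA 𝕜 ξ ν) (ρ (gC 𝕜 ξ ν) v) = ξ • ρ (gC 𝕜 ξ ν) (ρ (gA 𝕜 ξ ν) v) := by
  simpa [gA, gC] using LinearMap.congr_fun (map_mkAlgHom_eq_of_rel ρ DRel.ac) v

theorem gA_gG_apply : ρ (gA 𝕜 ξ ν) (ρ (gG 𝕜 ξ ν) v) = ρ (gG 𝕜 ξ ν) (ρ (gA 𝕜 ξ ν) v) := by
  simpa [gA, gG] using LinearMap.congr_fun (map_mkAlgHom_eq_of_rel ρ DRel.ag) v

theorem gD_gA_apply : ρ (gD 𝕜 ξ ν) (ρ (gA 𝕜 ξ ν) v) = v := by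
  simpa [gA, gD] using LinearMap.congr_fun
    ((map_mkAlgHom_eq_of_rel ρ DRel.adcomm).symm.trans (map_mkAlgHom_eq_of_rel ρ DRel.adone)) v

theorem gB_gB_apply : ρ (gB 𝕜 ξ ν) (ρ (gB 𝕜 ξ ν) v) = 0 := by
  simpa [gB] using LinearMap.congr_fun (map_mkAlgHom_eq_of_rel ρ DRel.bsq) v

theorem gB_gG_apply : ρ (gB 𝕜 ξ ν) (ρ (gG 𝕜 ξ ν) v) = -ρ (gG 𝕜 ξ ν) (ρ (gB 𝕜 ξ ν) v) := by
  simpa [gB, gG] using LinearMap.congr_fun (map_mkAlgHom_eq_of_rel ρ DRel.bg) v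

theorem gA_gA_gC_apply :
    ρ (gA 𝕜 ξ ν) (ρ (gA 𝕜 ξ ν) (ρ (gC 𝕜 ξ ν) v)) = ρ (gB 𝕜 ξ ν) v := by
  simpa [gA, gB, gC] using LinearMap.congr_fun (map_mkAlgHom_eq_of_rel ρ DRel.aac) v

theorem gX_gX_apply :
    ρ (gX 𝕜 ξ ν) (ρ (gX 𝕜 ξ ν) v) = ρ (gG 𝕜 ξ ν) (ρ (gG 𝕜 ξ ν) v) - v := by
  simpa [gX, gG] using LinearMap.congr_fun (map_mkAlgHom_eq_of_rel ρ DRel.xsq) v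

theorem gG_gX_apply : ρ (gG 𝕜 ξ ν) (ρ (gX 𝕜 ξ ν) v) = -ρ (gX 𝕜 ξ ν) (ρ (gG 𝕜 ξ ν) v) := by
  simpa [gG, gX] using LinearMap.congr_fun (map_mkAlgHom_eq_of_rel ρ DRel.gx) v

theorem gA_gX_apply :
    ρ (gA 𝕜 ξ ν) (ρ (gX 𝕜 ξ ν) v) =
      (ν * ξ) • (ρ (gB 𝕜 ξ ν) v + ρ (gG 𝕜 ξ ν) (ρ (gC 𝕜 ξ ν) v)) -
        ξ • ρ (gX 𝕜 ξ ν) (ρ (gA 𝕜 ξ ν) v) := by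
  simpa [gA, gB, gC, gG, gX] using
    LinearMap.congr_fun (map_mkAlgHom_eq_of_rel ρ DRel.axr) v

theorem gB_gX_apply :
    ρ (gB 𝕜 ξ ν) (ρ (gX 𝕜 ξ ν) v) =
      (ν * ξ) • (ρ (gA 𝕜 ξ ν) v - ρ (gG 𝕜 ξ ν) (ρ (gD 𝕜 ξ ν) v)) +
        ξ • ρ (gX 𝕜 ξ ν) (ρ (gB 𝕜 ξ ν) v) := by
  simpa [gA, gB, gD, gG, gX] using
    LinearMap.congr_fun (map_mkAlgHom_eq_of_rel ρ DRel.bxr) v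

theorem gC_gX_apply :
    ρ (gC 𝕜 ξ ν) (ρ (gX 𝕜 ξ ν) v) =
      (ν * ξ) • (ρ (gD 𝕜 ξ ν) v - ρ (gG 𝕜 ξ ν) (ρ (gA 𝕜 ξ ν) v)) -
        ξ • ρ (gX 𝕜 ξ ν) (ρ (gC 𝕜 ξ ν) v) := by
  simpa [gA, gC, gD, gG, gX] using
    LinearMap.congr_fun (map_mkAlgHom_eq_of_rel ρ DRel.cxr) v

theorem gD_gX_apply :
    ρ (gD 𝕜 ξ ν) (ρ (gX 𝕜 ξ ν) v) =
      (ν * ξ) • (ρ (gC 𝕜 ξ ν) v + ρ (gG 𝕜 ξ ν) (ρ (gB 𝕜 ξ ν) v)) +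
        ξ • ρ (gX 𝕜 ξ ν) (ρ (gD 𝕜 ξ ν) v) := by
  simpa [gB, gC, gD, gG, gX] using
    LinearMap.congr_fun (map_mkAlgHom_eq_of_rel ρ DRel.dxr) v

end DAlg

section WeightVector

variable {E F : Type*} [AddCommGroup E] [Module 𝕜 E] [AddCommGroup F] [Module 𝕜 F]

/-- `v` is a joint eigenvector of the group-like elements `a` and `g` on which they act as the
first basis vector of `P(ℓ)` asks, with `s` playing the role of `ξ ^ ℓ` (so that
`s ^ 2 = (-1) ^ ℓ`). The zero vector is allowed. -/
structure IsWeightVector (ρ : DAlg 𝕜 ξ ν →ₐ[𝕜] Module.End 𝕜 E) (s : 𝕜) (v : E) : Prop where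
  gA_apply : ρ (gA 𝕜 ξ ν) v = s • v
  gG_apply : ρ (gG 𝕜 ξ ν) v = s ^ 2 • v

namespace IsWeightVector

variable {ρ : DAlg 𝕜 ξ ν →ₐ[𝕜] Module.End 𝕜 E} {s : 𝕜} {v : E}

theorem gD_apply (hv : IsWeightVector ρ s v) (hs : s ≠ 0) : ρ (gD 𝕜 ξ ν) v = s⁻¹ • v := by
  rw [eq_inv_smul_iff₀ hs, ← map_smul, ← hv.gA_apply, DAlg.gD_gA_apply]

theorem gG_gB_apply (hv : IsWeightVector ρ s v) :
    ρ (gG 𝕜 ξ ν) (ρ (gB 𝕜 ξ ν) v) = -(s ^ 2 • ρ (gB 𝕜 ξ ν) v) := by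
  rw [← map_smul, ← hv.gG_apply, DAlg.gB_gG_apply, neg_neg]

theorem smul (hv : IsWeightVector ρ s v) (r : 𝕜) : IsWeightVector ρ s (r • v) where
  gA_apply := by rw [map_smul, hv.gA_apply, smul_comm]
  gG_apply := by rw [map_smul, hv.gG_apply, smul_comm]

theorem isWeightVector_gB (hv : IsWeightVector ρ s v) (hξ : ξ ^ 2 = -1) :
    IsWeightVector ρ (ξ * s) (ρ (gB 𝕜 ξ ν) v) where
  gA_apply := by rw [DAlg.gA_gB_apply, hv.gA_apply, map_smul, smul_smul]
  gG_apply := by rw [hv.gG_gB_apply, mul_pow, hξ, neg_one_mul, neg_smul]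

theorem gX_gX_apply (hv : IsWeightVector ρ s v) (hs : s ^ 4 = 1) :
    ρ (gX 𝕜 ξ ν) (ρ (gX 𝕜 ξ ν) v) = 0 := by
  rw [DAlg.gX_gX_apply, hv.gG_apply, map_smul, hv.gG_apply, smul_smul, ← pow_add, hs, one_smul,
    sub_self]

theorem gG_gX_apply (hv : IsWeightVector ρ s v) :
    ρ (gG 𝕜 ξ ν) (ρ (gX 𝕜 ξ ν) v) = -(s ^ 2 • ρ (gX 𝕜 ξ ν) v) := by
  rw [DAlg.gG_gX_apply, hv.gG_apply, map_smul]

theorem gB_gX_apply (hv : IsWeightVector ρ s v) (hs : s ≠ 0) :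
    ρ (gB 𝕜 ξ ν) (ρ (gX 𝕜 ξ ν) v) = ξ • ρ (gX 𝕜 ξ ν) (ρ (gB 𝕜 ξ ν) v) := by
  have hcancel : s⁻¹ * s ^ 2 = s := by field_simp
  rw [DAlg.gB_gX_apply, hv.gA_apply, hv.gD_apply hs, map_smul, hv.gG_apply, smul_smul, hcancel,
    sub_self, smul_zero, zero_add]

section FourthRoot

variable (hv : IsWeightVector ρ s v) (hξ : ξ ^ 2 = -1) (hs : s ^ 4 = 1)
include hv hξ hs

theorem gC_apply : ρ (gC 𝕜 ξ ν) v = -(s ^ 2 • ρ (gB 𝕜 ξ ν) v) := by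
  have hb : ρ (gB 𝕜 ξ ν) v = -(s ^ 2 • ρ (gC 𝕜 ξ ν) v) := by
    rw [← DAlg.gA_gA_gC_apply, DAlg.gA_gC_apply, hv.gA_apply, map_smul, map_smul, map_smul,
      DAlg.gA_gC_apply, hv.gA_apply, map_smul]
    linear_combination (norm := module) hξ • (s ^ 2 • ρ (gC 𝕜 ξ ν) v)
  rw [hb, smul_neg, neg_neg, smul_smul, ← pow_add, hs, one_smul]

theorem gA_gX_apply : ρ (gA 𝕜 ξ ν) (ρ (gX 𝕜 ξ ν) v) =
    (2 * ν * ξ) • ρ (gB 𝕜 ξ ν) v - (ξ * s) • ρ (gX 𝕜 ξ ν) v := by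
  have hgc : ρ (gG 𝕜 ξ ν) (ρ (gC 𝕜 ξ ν) v) = ρ (gB 𝕜 ξ ν) v := by
    rw [hv.gC_apply hξ hs, map_neg, map_smul, hv.gG_gB_apply, smul_neg, neg_neg, smul_smul,
      ← pow_add, hs, one_smul]
  rw [DAlg.gA_gX_apply, hgc, hv.gA_apply, map_smul]
  module

theorem gC_gX_apply : ρ (gC 𝕜 ξ ν) (ρ (gX 𝕜 ξ ν) v) =
    (ξ * s ^ 2) • ρ (gX 𝕜 ξ ν) (ρ (gB 𝕜 ξ ν) v) := by
  have hs₀ : s ≠ 0 := (IsUnit.of_pow_eq_one hs four_ne_zero).ne_zero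
  have hinv : s⁻¹ = s * s ^ 2 := by field_simp; exact hs.symm
  rw [DAlg.gC_gX_apply, hv.gD_apply hs₀, hv.gA_apply, map_smul, hv.gG_apply, smul_smul, hinv,
    sub_self, hv.gC_apply hξ hs, map_neg, map_smul]
  module

theorem gD_gX_apply : ρ (gD 𝕜 ξ ν) (ρ (gX 𝕜 ξ ν) v) =
    (ξ * s⁻¹) • ρ (gX 𝕜 ξ ν) v - (2 * ν * ξ * s ^ 2) • ρ (gB 𝕜 ξ ν) v := by
  rw [DAlg.gD_gX_apply, hv.gC_apply hξ hs, hv.gG_gB_apply,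
    hv.gD_apply (IsUnit.of_pow_eq_one hs four_ne_zero).ne_zero, map_smul]
  module

end FourthRoot

end IsWeightVector

end WeightVector

/-- `f` is a homomorphism of `D`-modules from `E` to `F`. -/
def DLinear {E F : Type*} [AddCommGroup E] [Module 𝕜 E] [AddCommGroup F] [Module 𝕜 F]
    (ρ : DAlg 𝕜 ξ ν →ₐ[𝕜] Module.End 𝕜 E) (ρ' : DAlg 𝕜 ξ ν →ₐ[𝕜] Module.End 𝕜 F)
    (f : E →ₗ[𝕜] F) : Prop :=
  ∀ (z : DAlg 𝕜 ξ ν) (v : E), f (ρ z v) = ρ' z (f v)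

/-- The `D`-module given by `ρ` is projective: every surjection of `D`-modules onto it splits. -/
def DProjective (ρ : DAlg 𝕜 ξ ν →ₐ[𝕜] Module.End 𝕜 V) : Prop :=
  ∀ (W : Type) (_ : AddCommGroup W) (_ : Module 𝕜 W)
    (ρW : DAlg 𝕜 ξ ν →ₐ[𝕜] Module.End 𝕜 W) (π : W →ₗ[𝕜] V),
    DLinear ρW ρ π → Function.Surjective π →
      ∃ σ : V →ₗ[𝕜] W, DLinear ρ ρW σ ∧ π ∘ₗ σ = LinearMap.id

section DLinear

variable {E F : Type*} [AddCommGroup E] [Module 𝕜 E] [AddCommGroup F] [Module 𝕜 F]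
  {ρ : DAlg 𝕜 ξ ν →ₐ[𝕜] Module.End 𝕜 E} {ρ' : DAlg 𝕜 ξ ν →ₐ[𝕜] Module.End 𝕜 F}

theorem DLinear.of_generators {f : E →ₗ[𝕜] F}
    (a : f ∘ₗ ρ (gA 𝕜 ξ ν) = ρ' (gA 𝕜 ξ ν) ∘ₗ f) (b : f ∘ₗ ρ (gB 𝕜 ξ ν) = ρ' (gB 𝕜 ξ ν) ∘ₗ f)
    (c : f ∘ₗ ρ (gC 𝕜 ξ ν) = ρ' (gC 𝕜 ξ ν) ∘ₗ f) (d : f ∘ₗ ρ (gD 𝕜 ξ ν) = ρ' (gD 𝕜 ξ ν) ∘ₗ f)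
    (x : f ∘ₗ ρ (gX 𝕜 ξ ν) = ρ' (gX 𝕜 ξ ν) ∘ₗ f) (g : f ∘ₗ ρ (gG 𝕜 ξ ν) = ρ' (gG 𝕜 ξ ν) ∘ₗ f) :
    DLinear ρ ρ' f := by
  intro z
  induction z using DAlg.induction with
  | algebraMap r => intro v; simp [Module.algebraMap_end_apply]
  | add y z hy hz => intro v; simp [hy, hz]
  | mul y z hy hz => intro v; simp [hy, hz]
  | a => exact LinearMap.congr_fun a
  | b => exact LinearMap.congr_fun b
  | c => exact LinearMap.congr_fun c
  | d => exact LinearMap.congr_fun d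
  | x => exact LinearMap.congr_fun x
  | g => exact LinearMap.congr_fun g

theorem DLinear.exists_isWeightVector_lift {f : E →ₗ[𝕜] F} (hf : DLinear ρ ρ' f)
    (hsurj : Function.Surjective f) (h4 : ((4 : ℕ) : 𝕜) ≠ 0) {s : 𝕜} (hs : s ^ 4 = 1) {v : F}
    (hv : IsWeightVector ρ' s v) : ∃ w, IsWeightVector ρ s w ∧ f w = v := by
  have hs₀ : s ≠ 0 := (IsUnit.of_pow_eq_one hs four_ne_zero).ne_zero
  have hs2 : (s ^ 2) ^ 4 = 1 := by rw [pow_right_comm, hs, one_pow]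
  obtain ⟨w, rfl⟩ := hsurj v
  refine ⟨eigenAverage 4 s (ρ (gA 𝕜 ξ ν)) (eigenAverage 4 (s ^ 2) (ρ (gG 𝕜 ξ ν)) w), ⟨?_, ?_⟩, ?_⟩
  · exact apply_eigenAverage (DAlg.map_gA_pow_four ρ) hs hs₀ _
  · rw [map_eigenAverage fun u => (DAlg.gA_gG_apply ρ u).symm,
      apply_eigenAverage (DAlg.map_gG_pow_four ρ) hs2 (pow_ne_zero 2 hs₀), map_smul]
  · rw [map_eigenAverage (hf _), map_eigenAverage (hf _),
      eigenAverage_apply_of_eigenvector h4 (pow_ne_zero 2 hs₀) hv.gG_apply,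
      eigenAverage_apply_of_eigenvector h4 hs₀ hv.gA_apply]

end DLinear

section DInvariant

variable {ρ : DAlg 𝕜 ξ ν →ₐ[𝕜] Module.End 𝕜 V}

theorem DInvariant.of_generators {U : Submodule 𝕜 V}
    (a : U ≤ U.comap (ρ (gA 𝕜 ξ ν))) (b : U ≤ U.comap (ρ (gB 𝕜 ξ ν)))
    (c : U ≤ U.comap (ρ (gC 𝕜 ξ ν))) (d : U ≤ U.comap (ρ (gD 𝕜 ξ ν)))
    (x : U ≤ U.comap (ρ (gX 𝕜 ξ ν))) (g : U ≤ U.comap (ρ (gG 𝕜 ξ ν))) :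
    DInvariant ρ U := by
  intro z
  induction z using DAlg.induction with
  | algebraMap r => intro v hv; simpa [Module.algebraMap_end_apply] using U.smul_mem r hv
  | add y z hy hz => intro v hv; simpa using U.add_mem (hy v hv) (hz v hv)
  | mul y z hy hz => intro v hv; simpa using hy _ (hz v hv)
  | a => exact a
  | b => exact b
  | c => exact c
  | d => exact d
  | x => exact x
  | g => exact g

theorem DLinear.dInvariant_eqLocus_id {f : V →ₗ[𝕜] V} (hf : DLinear ρ ρ f) :
    DInvariant ρ (LinearMap.eqLocus f LinearMap.id) := by
  intro z v hv
  rw [LinearMap.mem_eqLocus, LinearMap.id_apply] at hv ⊢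
  rw [hf, hv]

end DInvariant

/-- The image of the basis `(p₁, p₂, p₃, p₄)` of `P(ℓ)` under the homomorphism sending `p₁` to the
weight vector `w` of weight `s = ξ ^ ℓ`; note `p₂ = x p₁ - ν p₃`, `p₃ = s⁻¹ b p₁`, `p₄ = x p₃`. -/
noncomputable def weightTuple {E : Type*} [AddCommGroup E] [Module 𝕜 E]
    (ρ : DAlg 𝕜 ξ ν →ₐ[𝕜] Module.End 𝕜 E) (s : 𝕜) (w : E) : Fin 4 → E :=
  ![w, ρ (gX 𝕜 ξ ν) w - ν • s⁻¹ • ρ (gB 𝕜 ξ ν) w, s⁻¹ • ρ (gB 𝕜 ξ ν) w,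
    ρ (gX 𝕜 ξ ν) (s⁻¹ • ρ (gB 𝕜 ξ ν) w)]

theorem neg_one_pow_eq_sq_of_sq_eq_neg_one {R : Type*} [CommRing R] {z : R} (hz : z ^ 2 = -1)
    (n : ℕ) : (-1) ^ n = (z ^ n) ^ 2 := by
  rw [← hz, pow_right_comm]

theorem IsWeightVector.pOn_weightTuple {ρ : DAlg 𝕜 ξ ν →ₐ[𝕜] Module.End 𝕜 V}
    (hξ : ξ ^ 2 = -1) {ℓ : ZMod 4} {w : V} (hw : IsWeightVector ρ (ξ ^ ℓ.val) w) :
    POn ρ ℓ (weightTuple ρ (ξ ^ ℓ.val) w) := by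
  have hξ4 : ξ ^ 4 = 1 := by linear_combination (ξ ^ 2 - 1) * hξ
  have hs : (ξ ^ ℓ.val) ^ 4 = 1 := by rw [pow_right_comm, hξ4, one_pow]
  have hs₀ : ξ ^ ℓ.val ≠ 0 := (IsUnit.of_pow_eq_one hs four_ne_zero).ne_zero
  simp only [POn, neg_one_pow_eq_sq_of_sq_eq_neg_one hξ, pow_succ ξ ℓ.val]
  generalize ξ ^ ℓ.val = s at *
  have hξs : (ξ * s) ^ 4 = 1 := by rw [mul_pow, hξ4, hs, one_mul]
  have hξs₀ : ξ * s ≠ 0 := (IsUnit.of_pow_eq_one hξs four_ne_zero).ne_zero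
  have hξξ (r : 𝕜) : ξ * (ξ * r) = -r := by rw [← mul_assoc, ← sq, hξ, neg_one_mul]
  have hξs_sq : (ξ * s) ^ 2 = -s ^ 2 := by rw [mul_pow, hξ, neg_one_mul]
  have hξs_inv : (ξ * s)⁻¹ = -(ξ * s⁻¹) := by
    rw [mul_inv, inv_eq_of_mul_eq_one_right (show ξ * -ξ = 1 by linear_combination -hξ), neg_mul]
  have hs_inv : s⁻¹ = s ^ 3 := inv_eq_of_mul_eq_one_right (by rw [← pow_succ', hs])
  have hu : IsWeightVector ρ (ξ * s) (s⁻¹ • ρ (gB 𝕜 ξ ν) w) := (hw.isWeightVector_gB hξ).smul s⁻¹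
  have hbw : ρ (gB 𝕜 ξ ν) w = s • s⁻¹ • ρ (gB 𝕜 ξ ν) w := (smul_inv_smul₀ hs₀ _).symm
  have hbu : ρ (gB 𝕜 ξ ν) (s⁻¹ • ρ (gB 𝕜 ξ ν) w) = 0 := by
    rw [map_smul, DAlg.gB_gB_apply, smul_zero]
  unfold weightTuple
  generalize s⁻¹ • ρ (gB 𝕜 ξ ν) w = u at *
  simp only [Matrix.cons_val, map_zero, map_smul, map_sub, hw.gA_apply, hw.gC_apply hξ hs,
    hw.gD_apply hs₀, hw.gG_apply, hw.gA_gX_apply hξ hs, hw.gB_gX_apply hs₀, hw.gC_gX_apply hξ hs,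
    hw.gD_gX_apply hξ hs, hw.gG_gX_apply, hu.gA_apply, hu.gC_apply hξ hξs, hu.gD_apply hξs₀,
    hu.gG_apply, hu.gA_gX_apply hξ hξs, hu.gB_gX_apply hξs₀, hu.gC_gX_apply hξ hξs,
    hu.gD_gX_apply hξ hξs, hu.gG_gX_apply, hbw, hbu, hw.gX_gX_apply hs,
    hu.gX_gX_apply hξs, hξξ, hξs_sq, hξs_inv, hs_inv, mul_neg, true_and]
  and_intros <;> module

namespace POn

variable {ρ : DAlg 𝕜 ξ ν →ₐ[𝕜] Module.End 𝕜 V} {ρ' : DAlg 𝕜 ξ ν →ₐ[𝕜] Module.End 𝕜 W}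
  {ℓ : ZMod 4}

theorem isWeightVector_zero {p : Fin 4 → V} (hp : POn ρ ℓ p) (hξ : ξ ^ 2 = -1) :
    IsWeightVector ρ (ξ ^ ℓ.val) (p 0) := by
  obtain ⟨a₀, _, _, _, _, _, _, _, _, _, _, _, _, _, _, _, _, _, _, _, g₀, _⟩ := hp
  exact ⟨a₀, by rw [g₀, neg_one_pow_eq_sq_of_sq_eq_neg_one hξ]⟩

theorem dLinear_constr {p : Module.Basis (Fin 4) 𝕜 V} (hp : POn ρ ℓ p) {q : Fin 4 → W}
    (hq : POn ρ' ℓ q) : DLinear ρ ρ' (p.constr 𝕜 q) := by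
  have hf (m : Fin 4) : p.constr 𝕜 q (p m) = q m := p.constr_basis 𝕜 q m
  generalize p.constr 𝕜 q = f at *
  simp only [POn] at hp hq
  apply DLinear.of_generators <;> refine p.ext fun m => ?_ <;> fin_cases m <;> simp [hp, hq, hf]

theorem span_eq_ker_coord (p : Module.Basis (Fin 4) 𝕜 V) :
    Submodule.span 𝕜 {p 1, p 2, p 3} = LinearMap.ker (p.coord 0) := by
  have himage : ({p 1, p 2, p 3} : Set V) = p '' {0}ᶜ := by
    rw [show ({0}ᶜ : Set (Fin 4)) = {1, 2, 3} by ext m; fin_cases m <;> simp]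
    simp [Set.image_insert_eq]
  rw [himage, span_image_compl_singleton_eq_ker_coord]

theorem eq_top_of_zero_mem {p : Module.Basis (Fin 4) 𝕜 V} (hp : POn ρ ℓ p) (hξ : ξ ≠ 0)
    {U : Submodule 𝕜 V} (hU : DInvariant ρ U) (h₀ : p 0 ∈ U) : U = ⊤ := by
  obtain ⟨_, _, _, _, b₀, _, _, _, _, _, _, _, _, _, _, _, x₀, _, x₂, _⟩ := hp
  have h₂ : p 2 ∈ U := (U.smul_mem_iff (pow_ne_zero ℓ.val hξ)).1 (b₀ ▸ hU _ _ h₀)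
  have h₁ : p 1 ∈ U := (U.add_mem_iff_left (U.smul_mem ν h₂)).1 (x₀ ▸ hU _ _ h₀)
  have h₃ : p 3 ∈ U := x₂ ▸ hU _ _ h₂
  rw [eq_top_iff, ← p.span_eq, Submodule.span_le]
  rintro _ ⟨m, rfl⟩
  fin_cases m <;> assumption

theorem zero_mem_of_coord_ne_zero {p : Module.Basis (Fin 4) 𝕜 V} (hp : POn ρ ℓ p) (hξ : ξ ≠ 0)
    {U : Submodule 𝕜 V} (hU : DInvariant ρ U) {u : V} (hu : u ∈ U) (hu₀ : p.coord 0 u ≠ 0) :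
    p 0 ∈ U := by
  obtain ⟨_, _, _, _, b₀, b₁, b₂, b₃, _, _, _, _, _, _, _, _, x₀, x₁, x₂, x₃, _⟩ := hp
  obtain ⟨c, rfl⟩ : ∃ c : Fin 4 → 𝕜, c 0 • p 0 + c 1 • p 1 + c 2 • p 2 + c 3 • p 3 = u :=
    ⟨p.repr u, by rw [← Fin.sum_univ_four fun m => p.repr u m • p m, p.sum_repr]⟩
  have hc : c 0 ≠ 0 := by simpa [Finsupp.single_apply] using hu₀
  have hcs : c 0 * ξ ^ ℓ.val ≠ 0 := mul_ne_zero hc (pow_ne_zero _ hξ)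
  have hb : (c 0 * ξ ^ ℓ.val) • p 2 + (c 1 * ξ ^ (ℓ.val + 1)) • p 3 ∈ U := by
    simpa [b₀, b₁, b₂, b₃, smul_smul] using hU (gB 𝕜 ξ ν) _ hu
  have h₃ : p 3 ∈ U := (U.smul_mem_iff hcs).1 (by simpa [x₂, x₃] using hU (gX 𝕜 ξ ν) _ hb)
  have h₂ : p 2 ∈ U :=
    (U.smul_mem_iff hcs).1 ((U.add_mem_iff_left (U.smul_mem _ h₃)).1 hb)
  have h₀₁ : c 0 • p 0 + c 1 • p 1 ∈ U :=
    (U.add_mem_iff_left (U.smul_mem _ h₂)).1 ((U.add_mem_iff_left (U.smul_mem _ h₃)).1 hu)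
  have hx : c 0 • (p 1 + ν • p 2) + c 1 • -(ν • p 3) ∈ U := by
    simpa [x₀, x₁] using hU (gX 𝕜 ξ ν) _ h₀₁
  have h₁₂ : p 1 + ν • p 2 ∈ U := (U.smul_mem_iff hc).1
    ((U.add_mem_iff_left (U.smul_mem _ (U.neg_mem (U.smul_mem _ h₃)))).1 hx)
  have h₁ : p 1 ∈ U := (U.add_mem_iff_left (U.smul_mem _ h₂)).1 h₁₂
  exact (U.smul_mem_iff hc).1 ((U.add_mem_iff_left (U.smul_mem _ h₁)).1 h₀₁)

variable {p : Module.Basis (Fin 4) 𝕜 V} (hp : POn ρ ℓ p)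
include hp

theorem dProjective (hξ : ξ ^ 2 = -1) (h4 : ((4 : ℕ) : 𝕜) ≠ 0) : DProjective ρ := by
  have hξ4 : ξ ^ 4 = 1 := by linear_combination (ξ ^ 2 - 1) * hξ
  have hs : (ξ ^ ℓ.val) ^ 4 = 1 := by rw [pow_right_comm, hξ4, one_pow]
  intro W _ _ ρW π hπ hsurj
  obtain ⟨w, hw, hπw⟩ := hπ.exists_isWeightVector_lift hsurj h4 hs (hp.isWeightVector_zero hξ)
  let σ : V →ₗ[𝕜] W := p.constr 𝕜 (weightTuple ρW (ξ ^ ℓ.val) w)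
  have hσ : DLinear ρ ρW σ := hp.dLinear_constr (hw.pOn_weightTuple hξ)
  have hσ₀ : σ (p 0) = w := p.constr_basis 𝕜 _ 0
  have hπσ : DLinear ρ ρ (π ∘ₗ σ) := fun z v => by simp [hσ z v, hπ z (σ v)]
  refine ⟨σ, hσ, LinearMap.eqLocus_eq_top.1 ?_⟩
  refine hp.eq_top_of_zero_mem (IsUnit.of_pow_eq_one hξ4 four_ne_zero).ne_zero
    hπσ.dInvariant_eqLocus_id ?_
  simp [hσ₀, hπw]

theorem dInvariant_span : DInvariant ρ (Submodule.span 𝕜 {p 1, p 2, p 3}) := by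
  simp only [POn] at hp
  apply DInvariant.of_generators <;> rw [Submodule.span_le] <;>
    simp [Set.insert_subset_iff, span_eq_ker_coord, hp]

theorem le_span_of_ne_top (hξ : ξ ≠ 0) {U : Submodule 𝕜 V} (hU : DInvariant ρ U) (hne : U ≠ ⊤) :
    U ≤ Submodule.span 𝕜 {p 1, p 2, p 3} := by
  rw [span_eq_ker_coord]
  intro u hu
  by_contra hu₀
  exact hne (hp.eq_top_of_zero_mem hξ hU (hp.zero_mem_of_coord_ne_zero hξ hU hu hu₀))

end POn

theorem stmt_12_general {ℓ : ZMod 4} (hξ : IsPrimitiveRoot ξ 4)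
    {ρ : DAlg 𝕜 ξ ν →ₐ[𝕜] Module.End 𝕜 V} {p : Module.Basis (Fin 4) 𝕜 V} (hp : POn ρ ℓ p) :
    DProjective ρ ∧
    (letI P₂ : Submodule 𝕜 V := Submodule.span 𝕜 {p 1, p 2, p 3}
     DInvariant ρ P₂ ∧ P₂ ≠ ⊤ ∧
     (∀ U : Submodule 𝕜 V, DInvariant ρ U → U ≠ ⊤ → U ≤ P₂) ∧
     (ρ (gA 𝕜 ξ ν) (p 0) - ξ ^ ℓ.val • p 0 ∈ P₂ ∧ ρ (gB 𝕜 ξ ν) (p 0) ∈ P₂ ∧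
      ρ (gC 𝕜 ξ ν) (p 0) ∈ P₂ ∧ ρ (gD 𝕜 ξ ν) (p 0) - (ξ ^ ℓ.val)⁻¹ • p 0 ∈ P₂ ∧
      ρ (gX 𝕜 ξ ν) (p 0) ∈ P₂ ∧ ρ (gG 𝕜 ξ ν) (p 0) - (-1 : 𝕜) ^ ℓ.val • p 0 ∈ P₂)) := by
  have hξ2 : ξ ^ 2 = -1 := (hξ.pow (by norm_num) (by norm_num : 4 = 2 * 2)).eq_neg_one_of_two_right
  have h4 : ((4 : ℕ) : 𝕜) ≠ 0 := hξ.neZero'.ne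
  have hξ₀ : ξ ≠ 0 := hξ.ne_zero four_ne_zero
  refine ⟨hp.dProjective hξ2 h4, hp.dInvariant_span, ?_, fun U => hp.le_span_of_ne_top hξ₀, ?_⟩
  · rw [POn.span_eq_ker_coord, Ne, Submodule.eq_top_iff']
    exact fun h => by simpa using h (p 0)
  · simp only [POn] at hp
    simp [POn.span_eq_ker_coord, hp]

/-- `P` is a projective left `D`-module, and `P₂ = span{p₂, p₃, p₄}` is
the unique maximal proper `D`-submodule of `P`, with `P/P₂ ≅ 𝕜_{χ⁰}`; hence `P` is a
projective cover of the trivial module `𝕜_{χ⁰} = 𝕜_ε`. -/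
theorem stmt_12 (𝕜 : Type) [Field 𝕜] [IsAlgClosed 𝕜] [CharZero 𝕜]
    (ξ ν : 𝕜) (hξ : IsPrimitiveRoot ξ 4) (hν : ν ^ 2 = 2)
    (ρ : DAlg 𝕜 ξ ν →ₐ[𝕜] Module.End 𝕜 (Fin 4 → 𝕜))
    (hρ : POn ρ 0 (fun m => Pi.single m (1 : 𝕜))) :
    -- `P` is projective: every surjection of `D`-modules onto `P` splits `D`-linearly
    (∀ (W : Type) (_ : AddCommGroup W) (_ : Module 𝕜 W)
      (ρW : DAlg 𝕜 ξ ν →ₐ[𝕜] Module.End 𝕜 W) (π : W →ₗ[𝕜] Fin 4 → 𝕜),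
      (∀ (z : DAlg 𝕜 ξ ν) (w : W), π (ρW z w) = ρ z (π w)) →
      Function.Surjective π →
      ∃ σ : (Fin 4 → 𝕜) →ₗ[𝕜] W,
        (∀ (z : DAlg 𝕜 ξ ν) (v : Fin 4 → 𝕜), σ (ρ z v) = ρW z (σ v)) ∧
        π ∘ₗ σ = LinearMap.id) ∧
    -- `P₂` is the unique maximal proper `D`-submodule, and `P/P₂ ≅ 𝕜_{χ⁰}`
    (letI p : Fin 4 → (Fin 4 → 𝕜) := fun m => Pi.single m (1 : 𝕜)
     letI P₂ : Submodule 𝕜 (Fin 4 → 𝕜) :=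
       Submodule.span 𝕜 {p 1, p 2, p 3}
     DInvariant ρ P₂ ∧ P₂ ≠ ⊤ ∧
     (∀ U : Submodule 𝕜 (Fin 4 → 𝕜), DInvariant ρ U → U ≠ ⊤ → U ≤ P₂) ∧
     -- `D` acts on the class of `p₁` in `P/P₂` through the trivial character `χ⁰`
     (ρ (gA 𝕜 ξ ν) (p 0) - p 0 ∈ P₂ ∧ ρ (gB 𝕜 ξ ν) (p 0) ∈ P₂ ∧
      ρ (gC 𝕜 ξ ν) (p 0) ∈ P₂ ∧ ρ (gD 𝕜 ξ ν) (p 0) - p 0 ∈ P₂ ∧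
      ρ (gX 𝕜 ξ ν) (p 0) ∈ P₂ ∧ ρ (gG 𝕜 ξ ν) (p 0) - p 0 ∈ P₂)) := by
  have hp : POn ρ 0 (Pi.basisFun 𝕜 (Fin 4)) := by rwa [funext (Pi.basisFun_apply 𝕜 (Fin 4))]
  simpa [DProjective, DLinear] using stmt_12_general hξ hp
end
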